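/- arXiv:math/9907202 — 3 statements merged into one kernel-verified Lean document; each statement's English description precedes it below -/
import Mathlib

section
/- Let N be a seminorm on 𝔉, homogeneous of degree r, such that N(f) ≤ S_k(f) for every f ∈ 𝔉 supported in [−2,2]; let (f_ε) be a family homogeneous of degree κ ∈ ℂ, (τ_ε) a truncation family with constant C_tr, u_ε = τ_ε·f_ε, and let S_f bound S_k(f_ε; [−2,−1]) and S_k(f_ε; [1,2]) for all 0 < ε < 1 and S_k(f_1; [−2,2]). Then there exists a constant C, depending only on k and γ, such that for every ε ∈ (0,1]: (1) N(δ_t·u_ε) ≤ C·C_tr·S_f·t^{Re κ − r} for all t with ε ≤ t ≤ 1, and (2) N(γ_ε·u_ε) ≤ C·C_tr·S_f·ε^{Re κ − r}. -/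
/-!
The product `δ_t · u_ε` becomes, after rescaling by `t`, a product with a *fixed* cutoff. With
`η y = -y γ'(y)` one has `δ_t(x) = η (x / t)`, and homogeneity of the family gives
`f_ε(x) = t^κ f_{ε/t}(x / t)`, so

`δ_t(x) u_ε(x) = t^κ G(x / t)`,  `G y = η y · τ_ε(t y) · f_{ε/t} y`,

and hence `N(δ_t u_ε) = t^{Re κ - r} N(G) ≤ t^{Re κ - r} S_k(G)`. The same identity with `γ` in place
of `η` and `t = ε` handles `γ_ε u_ε`; both are covered by `scaled_bound`.

It remains to bound `S_k(G)` uniformly (`sobolev_mul_le`). Since `t ≤ 1`, the derivatives of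
`y ↦ τ_ε(t y)` are still bounded by `C_tr`, so the Leibniz rule bounds `S_k(G)` by a constant
depending on `k` and the cutoff, times `C_tr`, times `S_k(f_{ε/t}; J)` for any compact `J` containing
the support of the cutoff. For `η` one takes `J = [-2,-1] ∪ [1,2]`, because `γ` is constant on
`[-1,1]`; the hypotheses bound `S_k(f_{ε/t}; J)` by `2 S_f`, through the two annular bounds when
`t > ε` and through the bound on `f_1` when `t = ε`. For `γ` one takes `J = [-2,2]` and `f_1`.
-/

open MeasureTheory Real Complex

/-- Membership in `𝔉 = C_c^∞(ℝ)`. -/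
def IsCc (f : ℝ → ℂ) : Prop := ContDiff ℝ (⊤ : ℕ∞) f ∧ HasCompactSupport f

/-- `S_k(f)² = Σ_{j≤k} ∫_ℝ |f^{(j)}|²`. -/
noncomputable def sobolev (k : ℕ) (f : ℝ → ℂ) : ℝ :=
  Real.sqrt (∑ j ∈ Finset.range (k + 1), ∫ x : ℝ, ‖iteratedDeriv j f x‖ ^ 2)

/-- `S_k(f; J)² = Σ_{j≤k} ∫_J |f^{(j)}|²`. -/
noncomputable def sobolevOn (k : ℕ) (f : ℝ → ℂ) (J : Set ℝ) : ℝ :=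
  Real.sqrt (∑ j ∈ Finset.range (k + 1), ∫ x in J, ‖iteratedDeriv j f x‖ ^ 2)

/-! ### Multiplication by a cutoff in Sobolev norms -/

/-- Leibniz rule in the form used below: bounds on all derivatives of order at most `k` multiply,
up to the factor `2 ^ k`. -/
lemma norm_iteratedDeriv_mul_le_two_pow {k j : ℕ} (hj : j ≤ k) {f g : ℝ → ℂ}
    (hf : ContDiff ℝ (⊤ : ℕ∞) f) (hg : ContDiff ℝ (⊤ : ℕ∞) g) {x A B : ℝ}
    (hA : ∀ i ≤ k, ‖iteratedDeriv i f x‖ ≤ A) (hB : ∀ i ≤ k, ‖iteratedDeriv i g x‖ ≤ B) :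
    ‖iteratedDeriv j (fun y => f y * g y) x‖ ≤ 2 ^ k * A * B := by
  have hA0 : 0 ≤ A := (norm_nonneg _).trans (hA 0 (Nat.zero_le _))
  have hB0 : 0 ≤ B := (norm_nonneg _).trans (hB 0 (Nat.zero_le _))
  have h := norm_iteratedFDeriv_mul_le (𝕜 := ℝ) hf hg x (n := j) (by exact_mod_cast le_top)
  simp only [norm_iteratedFDeriv_eq_norm_iteratedDeriv] at h
  calc _ ≤ _ := h
    _ ≤ ∑ i ∈ Finset.range (j + 1), (j.choose i : ℝ) * (A * B) := by
        refine Finset.sum_le_sum fun i hi => ?_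
        have hi' : i ≤ k := (Nat.lt_succ_iff.1 (Finset.mem_range.1 hi)).trans hj
        rw [mul_assoc]
        gcongr
        · exact hA i hi'
        · exact hB _ ((Nat.sub_le _ _).trans hj)
    _ = 2 ^ j * (A * B) := by
        rw [← Finset.sum_mul]
        congr 1
        exact_mod_cast Nat.sum_range_choose j
    _ ≤ 2 ^ k * (A * B) := by
        gcongr
        norm_num
    _ = _ := by ring

lemma exists_bound_iteratedDeriv (k : ℕ) {η : ℝ → ℂ} (hη : IsCc η) :
    ∃ M > (0 : ℝ), ∀ j ≤ k, ∀ x, ‖iteratedDeriv j η x‖ ≤ M := by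
  have h : ∀ j : ℕ, ∃ M, ∀ x, ‖iteratedDeriv j η x‖ ≤ M := fun j => by
    obtain ⟨M, hM⟩ := (hη.1.continuous_iteratedFDeriv (m := j)
      (by exact_mod_cast le_top)).bounded_above_of_compact_support (hη.2.iteratedFDeriv j)
    exact ⟨M, fun x => by simpa only [norm_iteratedFDeriv_eq_norm_iteratedDeriv] using hM x⟩
  choose M hM using h
  refine ⟨1 + ∑ j ∈ Finset.range (k + 1), |M j|, by positivity, fun j hj x => ?_⟩
  have h1 := Finset.single_le_sum (f := fun j => |M j|) (fun i _ => abs_nonneg _)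
    (Finset.mem_range.2 (Nat.lt_succ_iff.2 hj))
  have h2 := hM j x
  have h3 := le_abs_self (M j)
  linarith

lemma iteratedDeriv_eq_zero_of_notMem {j : ℕ} {f : ℝ → ℂ} {x : ℝ} (hx : x ∉ tsupport f) :
    iteratedDeriv j f x = 0 := by
  rw [← norm_eq_zero, ← norm_iteratedFDeriv_eq_norm_iteratedDeriv, norm_eq_zero]
  by_contra h
  exact hx (support_iteratedFDeriv_subset (𝕜 := ℝ) j h)

lemma integrableOn_sq_norm_iteratedDeriv {f : ℝ → ℂ} (hf : ContDiff ℝ (⊤ : ℕ∞) f) (j : ℕ)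
    {J : Set ℝ} (hJ : IsCompact J) :
    IntegrableOn (fun x => ‖iteratedDeriv j f x‖ ^ 2) J :=
  ((hf.continuous_iteratedDeriv j (by exact_mod_cast le_top)).norm.pow 2).continuousOn
    |>.integrableOn_compact hJ

/-- Multiplication by a fixed cutoff `η` and by a factor `τ` with derivatives bounded by `Ctr`
is bounded from `S_k(·; J)` to `S_k`, as soon as `J` contains the support of `η`. The constant
depends on `k` and `η` only. -/
lemma sobolev_mul_le (k : ℕ) {η : ℝ → ℂ} (hη : IsCc η) :
    ∃ C > (0 : ℝ), ∀ (J : Set ℝ) (τ f : ℝ → ℂ) (Ctr : ℝ), IsCompact J → tsupport η ⊆ J →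
      ContDiff ℝ (⊤ : ℕ∞) τ → ContDiff ℝ (⊤ : ℕ∞) f →
      (∀ j ≤ k, ∀ x, ‖iteratedDeriv j τ x‖ ≤ Ctr) →
      sobolev k (fun x => η x * τ x * f x) ≤ C * Ctr * sobolevOn k f J := by
  obtain ⟨M, hM0, hM⟩ := exists_bound_iteratedDeriv k hη
  refine ⟨(k + 1) * (2 ^ k * (2 ^ k * M)), by positivity, ?_⟩
  intro J τ f Ctr hJ hηJ hτ hf hCtr
  have hC0 : 0 ≤ Ctr := (norm_nonneg _).trans (hCtr 0 (Nat.zero_le _) 0)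
  set A : ℝ := 2 ^ k * (2 ^ k * M * Ctr) with hA
  have hA0 : 0 ≤ A := by positivity
  have hητ : ContDiff ℝ (⊤ : ℕ∞) (fun x => η x * τ x) := hη.1.mul hτ
  set g : ℝ → ℂ := fun x => η x * τ x * f x with hgdef
  have hg : ContDiff ℝ (⊤ : ℕ∞) g := hητ.mul hf
  have hsupp : tsupport g ⊆ J := by
    refine (closure_mono fun x hx => ?_).trans hηJ
    intro h0
    exact hx (by simp [hgdef, h0])
  have hpt : ∀ j ≤ k, ∀ x, ‖iteratedDeriv j g x‖ ^ 2 ≤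
      A ^ 2 * (k + 1) * ∑ c ∈ Finset.range (k + 1), ‖iteratedDeriv c f x‖ ^ 2 := by
    intro j hj x
    have h1 := norm_iteratedDeriv_mul_le_two_pow hj hητ hf (x := x)
      (A := 2 ^ k * M * Ctr) (B := ∑ c ∈ Finset.range (k + 1), ‖iteratedDeriv c f x‖)
      (fun i hi => norm_iteratedDeriv_mul_le_two_pow hi hη.1 hτ (fun l hl => hM l hl x)
        (fun l hl => hCtr l hl x))
      (fun i hi => Finset.single_le_sum (f := fun c => ‖iteratedDeriv c f x‖)
        (fun _ _ => norm_nonneg _) (Finset.mem_range.2 (Nat.lt_succ_iff.2 hi)))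
    have h2 := sq_sum_le_card_mul_sum_sq (s := Finset.range (k + 1))
      (f := fun c => ‖iteratedDeriv c f x‖)
    rw [Finset.card_range] at h2
    push_cast at h2
    calc _ ≤ (A * ∑ c ∈ Finset.range (k + 1), ‖iteratedDeriv c f x‖) ^ 2 := by
          gcongr
      _ = A ^ 2 * (∑ c ∈ Finset.range (k + 1), ‖iteratedDeriv c f x‖) ^ 2 := by ring
      _ ≤ A ^ 2 * ((k + 1) * ∑ c ∈ Finset.range (k + 1), ‖iteratedDeriv c f x‖ ^ 2) := by gcongr
      _ = _ := by ring
  have hint : ∀ j ≤ k, ∫ x, ‖iteratedDeriv j g x‖ ^ 2 ≤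
      A ^ 2 * (k + 1) * ∑ c ∈ Finset.range (k + 1), ∫ x in J, ‖iteratedDeriv c f x‖ ^ 2 := by
    intro j hj
    rw [← setIntegral_eq_integral_of_forall_compl_eq_zero (s := J)
      (fun x hx => by rw [iteratedDeriv_eq_zero_of_notMem fun h => hx (hsupp h)]; simp),
      ← integral_finsetSum _ fun c _ => integrableOn_sq_norm_iteratedDeriv hf c hJ,
      ← integral_const_mul]
    exact integral_mono (integrableOn_sq_norm_iteratedDeriv hg j hJ)
      ((integrable_finsetSum _ fun c _ =>
        integrableOn_sq_norm_iteratedDeriv hf c hJ).const_mul _) (hpt j hj)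
  unfold sobolev sobolevOn
  refine Real.sqrt_le_iff.2 ⟨by positivity, ?_⟩
  rw [mul_pow, Real.sq_sqrt (Finset.sum_nonneg fun c _ => integral_nonneg fun x => by positivity)]
  calc _ ≤ ∑ j ∈ Finset.range (k + 1), A ^ 2 * (k + 1) *
        ∑ c ∈ Finset.range (k + 1), ∫ x in J, ‖iteratedDeriv c f x‖ ^ 2 :=
        Finset.sum_le_sum fun j hj => hint j (Nat.lt_succ_iff.1 (Finset.mem_range.1 hj))
    _ = _ := by
        rw [Finset.sum_const, Finset.card_range, nsmul_eq_mul, hA]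
        push_cast
        ring

/-! ### Dependence of the local Sobolev norms on the set -/

lemma sobolevOn_mono (k : ℕ) {f : ℝ → ℂ} (hf : ContDiff ℝ (⊤ : ℕ∞) f) {I J : Set ℝ}
    (hIJ : I ⊆ J) (hJ : IsCompact J) : sobolevOn k f I ≤ sobolevOn k f J := by
  unfold sobolevOn
  refine Real.sqrt_le_sqrt (Finset.sum_le_sum fun j _ => ?_)
  exact setIntegral_mono_set (integrableOn_sq_norm_iteratedDeriv hf j hJ)
    (Filter.Eventually.of_forall fun x => by positivity) hIJ.eventuallyLE

lemma sobolevOn_union_le (k : ℕ) {f : ℝ → ℂ} (hf : ContDiff ℝ (⊤ : ℕ∞) f) {I J : Set ℝ}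
    (hI : IsCompact I) (hJ : IsCompact J) (hIJ : Disjoint I J) :
    sobolevOn k f (I ∪ J) ≤ sobolevOn k f I + sobolevOn k f J := by
  unfold sobolevOn
  rw [Finset.sum_congr rfl fun j _ => setIntegral_union hIJ hJ.measurableSet
    (integrableOn_sq_norm_iteratedDeriv hf j hI) (integrableOn_sq_norm_iteratedDeriv hf j hJ),
    Finset.sum_add_distrib]
  refine Real.sqrt_le_iff.2 ⟨by positivity, ?_⟩
  rw [add_sq, Real.sq_sqrt (Finset.sum_nonneg fun c _ => integral_nonneg fun x => by positivity),
    Real.sq_sqrt (Finset.sum_nonneg fun c _ => integral_nonneg fun x => by positivity),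
    add_right_comm]
  exact le_add_of_nonneg_right (by positivity)

/-! ### Rescaling -/

/-- The scaling argument common to both estimates: for a cutoff `η` supported in a compact
`J ⊆ [-2,2]`, the function `h_t(η) · τ · f_ε` is `t ^ κ` times the dilation by `t` of a function
supported in `J`, whose Sobolev norm is controlled by that of `f_{ε/t}` on `J`. -/
lemma scaled_bound (k : ℕ) {η : ℝ → ℂ} (hη : IsCc η) {J : Set ℝ} (hJ : IsCompact J)
    (hηJ : tsupport η ⊆ J) (hJ2 : J ⊆ Set.Icc (-2 : ℝ) 2) :
    ∃ C > (0 : ℝ), ∀ (N : (ℝ → ℂ) → ℝ) (r : ℝ) (κ : ℂ) (f : ℝ → ℝ → ℂ) (τ : ℝ → ℂ) (Ctr : ℝ),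
      (∀ (a : ℂ) (g), IsCc g → N (fun x => a * g x) = ‖a‖ * N g) →
      (∀ s : ℝ, 0 < s → ∀ g, IsCc g → N (fun x => g (x / s)) = s ^ (-r) * N g) →
      (∀ g, IsCc g → tsupport g ⊆ Set.Icc (-2 : ℝ) 2 → N g ≤ sobolev k g) →
      (∀ ε : ℝ, 0 < ε → ContDiff ℝ (⊤ : ℕ∞) (f ε)) →
      (∀ t : ℝ, 0 < t → ∀ ε : ℝ, 0 < ε → ∀ x : ℝ,
        f (t * ε) (t * x) = (t : ℂ) ^ κ * f ε x) →
      ContDiff ℝ (⊤ : ℕ∞) τ → (∀ j ≤ k, ∀ x : ℝ, ‖iteratedDeriv j τ x‖ ≤ Ctr) →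
      ∀ ε t : ℝ, 0 < ε → 0 < t → t ≤ 1 →
        N (fun x => η (x / t) * (τ x * f ε x)) ≤
          C * Ctr * sobolevOn k (f (ε / t)) J * t ^ (κ.re - r) := by
  obtain ⟨C, hC, hbound⟩ := sobolev_mul_le k hη
  refine ⟨C, hC, ?_⟩
  intro N r κ f τ Ctr hNmul hNdil hNS hf hfhom hτ hτb ε t hε ht ht1
  have hτt : ContDiff ℝ (⊤ : ℕ∞) (fun y => τ (t * y)) := hτ.comp (contDiff_const.mul contDiff_id)
  have hft := hf (ε / t) (by positivity)
  -- Dilating by `t ≤ 1` multiplies the `j`-th derivative by `t ^ j ≤ 1`.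
  have hτtb : ∀ j ≤ k, ∀ x : ℝ, ‖iteratedDeriv j (fun y => τ (t * y)) x‖ ≤ Ctr := by
    intro j hj x
    rw [iteratedDeriv_comp_const_smul (hτ.of_le (by exact_mod_cast le_top)) t, norm_smul, norm_pow,
      Real.norm_of_nonneg ht.le]
    exact (mul_le_of_le_one_left (norm_nonneg _) (pow_le_one₀ ht.le ht1)).trans (hτb j hj _)
  set G : ℝ → ℂ := fun y => η y * τ (t * y) * f (ε / t) y with hG
  have hGη : tsupport G ⊆ tsupport η := by
    refine closure_mono fun x hx h0 => hx ?_
    simp [hG, h0]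
  have hGcc : IsCc G := ⟨(hη.1.mul hτt).mul hft, hη.2.of_isClosed_subset isClosed_closure hGη⟩
  have hGbound := (hNS G hGcc ((hGη.trans hηJ).trans hJ2)).trans
    (hbound J _ _ Ctr hJ hηJ hτt hft hτtb)
  have hfun : (fun x => η (x / t) * (τ x * f ε x)) =
      fun x => (t : ℂ) ^ κ * (fun y => G (y / t)) x := by
    funext x
    have h := hfhom t ht (ε / t) (by positivity) (x / t)
    rw [mul_div_cancel₀ _ ht.ne', mul_div_cancel₀ _ ht.ne'] at h
    simp only [hG, h, mul_div_cancel₀ x ht.ne']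
    ring
  have hGtcc : IsCc (fun y => G (y / t)) := by
    refine ⟨hGcc.1.comp (contDiff_id.div_const t), ?_⟩
    simpa [div_eq_inv_mul] using hGcc.2.comp_smul (inv_ne_zero ht.ne')
  rw [hfun, hNmul _ _ hGtcc, hNdil t ht G hGcc, Complex.norm_cpow_eq_rpow_re_of_pos ht,
    ← mul_assoc, ← Real.rpow_add ht, ← sub_eq_add_neg, mul_comm]
  gcongr

/-! ### The annular cutoffs `δ_t` -/

/-- The profile `y ↦ -y γ'(y)` of `δ_t`. -/
noncomputable def annularProfile (γ : ℝ → ℂ) (y : ℝ) : ℂ := -(y : ℂ) * deriv γ y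

lemma annularProfile_isCc {γ : ℝ → ℂ} (hγ : IsCc γ) : IsCc (annularProfile γ) := by
  have hd : ContDiff ℝ (⊤ : ℕ∞) (deriv γ) := (contDiff_infty_iff_deriv.1 hγ.1).2
  exact ⟨(Complex.ofRealCLM.contDiff.neg).mul hd, hγ.2.deriv.mul_left⟩

lemma tsupport_annularProfile_subset {γ : ℝ → ℂ} (hγsupp : tsupport γ ⊆ Set.Icc (-2 : ℝ) 2)
    (hγone : ∀ x ∈ Set.Icc (-1 : ℝ) 1, γ x = 1) :
    tsupport (annularProfile γ) ⊆ Set.Icc (-2 : ℝ) (-1) ∪ Set.Icc 1 2 := by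
  refine closure_minimal (fun x hx => ?_) (isClosed_Icc.union isClosed_Icc)
  have hdx : deriv γ x ≠ 0 := fun h => hx (by simp [annularProfile, h])
  have h2 := hγsupp (support_deriv_subset hdx)
  have h1 : ¬ (-1 < x ∧ x < 1) := fun h => hdx <| by
    have : γ =ᶠ[nhds x] fun _ => 1 := by
      filter_upwards [Ioo_mem_nhds h.1 h.2] with y hy
      exact hγone y ⟨hy.1.le, hy.2.le⟩
    rw [this.deriv_eq, deriv_const]
  rcases le_or_gt x (-1) with h | h
  · exact Or.inl ⟨h2.1, h⟩
  · exact Or.inr ⟨not_lt.1 fun h' => h1 ⟨h, h'⟩, h2.2⟩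

/-- `δ_t = h_t(annularProfile γ)`. -/
lemma mul_deriv_dilation {γ : ℝ → ℂ} (hγ : IsCc γ) {t : ℝ} (ht : 0 < t) (x : ℝ) :
    (t : ℂ) * deriv (fun s : ℝ => γ (x / s)) t = annularProfile γ (x / t) := by
  have h1 : HasDerivAt (fun s : ℝ => x / s) (-x / t ^ 2) t := by
    have h := (hasDerivAt_const t x).fun_div (hasDerivAt_id' t) ht.ne'
    simpa using h
  have h2 : HasDerivAt γ (deriv γ (x / t)) (x / t) :=
    ((hγ.1.differentiable (by simp)) _).hasDerivAt
  have h3 : HasDerivAt (fun s : ℝ => γ (x / s)) _ t := h2.scomp t h1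
  have ht' : (t : ℂ) ≠ 0 := by exact_mod_cast ht.ne'
  rw [h3.deriv, annularProfile, Complex.real_smul]
  push_cast
  field_simp

/-! ### The two estimates -/

/-- The Claim of §5.4: with `γ ∈ 𝔉` equal to `1` on `[−1,1]` and supported in
`[−2,2]`, `γ_t = h_t γ`, `δ_t = t·(d/dt)γ_t`, there is `C > 0` depending only
on `k` and `γ` such that for `u_ε = τ_ε f_ε` as in the dyadic decomposition
proposition: (1) `N(δ_t·u_ε) ≤ C·C_tr·S_f·t^{Re κ − r}` for `ε ≤ t ≤ 1`;
(2) `N(γ_ε·u_ε) ≤ C·C_tr·S_f·ε^{Re κ − r}`. -/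
theorem stmt7 (k : ℕ) (γ : ℝ → ℂ) (hγ : IsCc γ)
    (hγsupp : tsupport γ ⊆ Set.Icc (-2 : ℝ) 2)
    (hγone : ∀ x ∈ Set.Icc (-1 : ℝ) 1, γ x = 1) :
    ∃ C > (0 : ℝ),
      ∀ (N : (ℝ → ℂ) → ℝ) (r : ℝ) (κ : ℂ)
        (f : ℝ → ℝ → ℂ) (τ : ℝ → ℝ → ℂ) (Ctr Sf : ℝ),
        (∀ g, IsCc g → 0 ≤ N g) →
        (∀ g₁ g₂, IsCc g₁ → IsCc g₂ → N (g₁ + g₂) ≤ N g₁ + N g₂) →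
        (∀ (a : ℂ) (g), IsCc g → N (fun x => a * g x) = ‖a‖ * N g) →
        (∀ s : ℝ, 0 < s → ∀ g, IsCc g →
          N (fun x => g (x / s)) = s ^ (-r) * N g) →
        (∀ g, IsCc g → tsupport g ⊆ Set.Icc (-2 : ℝ) 2 → N g ≤ sobolev k g) →
        (∀ ε : ℝ, 0 < ε → ContDiff ℝ (⊤ : ℕ∞) (f ε)) →
        (∀ t : ℝ, 0 < t → ∀ ε : ℝ, 0 < ε → ∀ x : ℝ,
          f (t * ε) (t * x) = (t : ℂ) ^ κ * f ε x) →
        (∀ ε ∈ Set.Ioc (0 : ℝ) 1, IsCc (τ ε) ∧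
          tsupport (τ ε) ⊆ Set.Icc (-1 : ℝ) 1 ∧
          ∀ j ≤ k, ∀ x : ℝ, ‖iteratedDeriv j (τ ε) x‖ ≤ Ctr) →
        (∀ ε ∈ Set.Ioo (0 : ℝ) 1,
          sobolevOn k (f ε) (Set.Icc (-2 : ℝ) (-1)) ≤ Sf ∧
          sobolevOn k (f ε) (Set.Icc (1 : ℝ) 2) ≤ Sf) →
        sobolevOn k (f 1) (Set.Icc (-2 : ℝ) 2) ≤ Sf →
        ∀ ε ∈ Set.Ioc (0 : ℝ) 1,
          (∀ t : ℝ, ε ≤ t → t ≤ 1 →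
            N (fun x => ((t : ℂ) * deriv (fun s : ℝ => γ (x / s)) t) *
                (τ ε x * f ε x)) ≤ C * Ctr * Sf * t ^ (κ.re - r)) ∧
          N (fun x => γ (x / ε) * (τ ε x * f ε x)) ≤
            C * Ctr * Sf * ε ^ (κ.re - r) := by
  have hsub : Set.Icc (-2 : ℝ) (-1) ∪ Set.Icc 1 2 ⊆ Set.Icc (-2 : ℝ) 2 :=
    Set.union_subset (Set.Icc_subset_Icc le_rfl (by norm_num))
      (Set.Icc_subset_Icc (by norm_num) le_rfl)
  have hdisj : Disjoint (Set.Icc (-2 : ℝ) (-1)) (Set.Icc 1 2) :=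
    Set.disjoint_left.2 fun x h1 h2 => by linarith [h1.2, h2.1]
  obtain ⟨C₁, hC₁, hb₁⟩ := scaled_bound k (annularProfile_isCc hγ) (isCompact_Icc.union isCompact_Icc)
    (tsupport_annularProfile_subset hγsupp hγone) hsub
  obtain ⟨C₂, hC₂, hb₂⟩ := scaled_bound k hγ isCompact_Icc hγsupp subset_rfl
  refine ⟨2 * C₁ + C₂, by positivity, ?_⟩
  intro N r κ f τ Ctr Sf _ _ hNmul hNdil hNS hf hfhom hτ hSf hSf1 ε hε
  obtain ⟨hτcc, -, hτb⟩ := hτ ε hε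
  have hCtr0 : 0 ≤ Ctr := (norm_nonneg _).trans (hτb 0 (Nat.zero_le _) 0)
  have hSf0 : 0 ≤ Sf := (Real.sqrt_nonneg _).trans hSf1
  refine ⟨fun t hεt ht1 => ?_, ?_⟩
  · have ht : 0 < t := hε.1.trans_le hεt
    have hS : sobolevOn k (f (ε / t)) (Set.Icc (-2 : ℝ) (-1) ∪ Set.Icc 1 2) ≤ 2 * Sf := by
      rcases hεt.eq_or_lt with rfl | hlt
      · rw [div_self ht.ne']
        linarith [sobolevOn_mono k (hf 1 one_pos) hsub isCompact_Icc]
      · have h := hSf (ε / t) ⟨div_pos hε.1 ht, (div_lt_one ht).2 hlt⟩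
        linarith [sobolevOn_union_le k (hf (ε / t) (div_pos hε.1 ht)) isCompact_Icc isCompact_Icc
          hdisj, h.1, h.2]
    simp only [mul_deriv_dilation hγ ht]
    refine (hb₁ N r κ f (τ ε) Ctr hNmul hNdil hNS hf hfhom hτcc.1 hτb ε t hε.1 ht ht1).trans ?_
    refine mul_le_mul_of_nonneg_right ?_ (Real.rpow_nonneg ht.le _)
    calc _ ≤ C₁ * Ctr * (2 * Sf) := by gcongr
      _ = 2 * C₁ * Ctr * Sf := by ring
      _ ≤ _ := by
        gcongr
        linarith
  · have h := hb₂ N r κ f (τ ε) Ctr hNmul hNdil hNS hf hfhom hτcc.1 hτb ε ε hε.1 hε.1 hε.2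
    rw [div_self hε.1.ne'] at h
    refine h.trans (mul_le_mul_of_nonneg_right ?_ (Real.rpow_nonneg hε.1.le _))
    calc _ ≤ C₂ * Ctr * Sf := by gcongr
      _ ≤ _ := by
        gcongr
        linarith
end

section
/- U is an open, connected subset of SL(2,ℂ) containing SL(2,ℝ), stable under left multiplication by SL(2,ℝ) and under right multiplication by SO(2,ℂ); moreover, for every g ∈ U and every (x,y) ∈ ℝ² ∖ {(0,0)} one has Re(g(Q)(x,y)) > 0, so that for each fixed λ ∈ ℂ and each fixed (x,y) ∈ ℝ² ∖ {(0,0)}, the function g ↦ (g(Q)(x,y))^{(λ−1)/2}, defined via the principal branch of the logarithm, is well-defined and holomorphic on U. -/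
/-!
For `g` in `SL(2,ℂ)` the form `g(Q)` has Gram matrix `S = g gᵀ`, a complex symmetric matrix of
determinant one. A real binary form is positive definite iff two polynomial inequalities in its
coefficients hold, which gives openness. Stability on the left holds because `SL(2,ℝ)` permutes
the nonzero real row vectors, and on the right because `SO(2,ℂ)` fixes `Q`.

Connectedness comes from an explicit parametrisation of `U` by the connected space `ℝ⁴ × ℂ`. A real
lower triangular matrix of determinant one brings `Re S` to the form `r • 1` with `r > 0`
(`exists_lowerTri_mul`). Then `det S = 1` forces
`S = [[r + ip, iq], [iq, r - ip]]` with `r² + p² + q² = 1`, an open hemisphere, which is a copy of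
`ℝ²`. The matrix `cholesky` is a continuous section `L` of `g ↦ g gᵀ` over this hemisphere. Two
elements with the same form differ by right multiplication by an element of `SO(2,ℂ)`, and
`SO(2,ℂ)` is the image of `ℂ` under complex rotation. So `U` is the range of the continuous map
`param`, a product of these three factors.
-/

open Complex

abbrev SL2R := Matrix.SpecialLinearGroup (Fin 2) ℝ
abbrev SL2C := Matrix.SpecialLinearGroup (Fin 2) ℂ

noncomputable instance : TopologicalSpace SL2C := instTopologicalSpaceSubtype

/-- The embedding `SL(2,ℝ) → SL(2,ℂ)`. -/
noncomputable def toSL2C : SL2R →* SL2C :=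
  Matrix.SpecialLinearGroup.map (algebraMap ℝ ℂ)

/-- `g(Q)(x,y) = Q((x,y)·g)` where `Q(x,y) = x² + y²` and `(x,y)` is a row
vector. -/
def gQ (g : SL2C) (x y : ℂ) : ℂ :=
  (x * g 0 0 + y * g 1 0) ^ 2 + (x * g 0 1 + y * g 1 1) ^ 2

/-- The same expression on the ambient space of all `2×2` complex matrices
(written as `Fin 2 → Fin 2 → ℂ` to have a normed-space structure). -/
def mQ (m : Fin 2 → Fin 2 → ℂ) (x y : ℂ) : ℂ :=
  (x * m 0 0 + y * m 1 0) ^ 2 + (x * m 0 1 + y * m 1 1) ^ 2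

/-- `U = {g ∈ SL(2,ℂ) : Re(g(Q)) is positive definite on ℝ²}`. -/
def USet : Set SL2C :=
  {g | ∀ x y : ℝ, (x, y) ≠ (0, 0) → 0 < (gQ g (x : ℂ) (y : ℂ)).re}

/-- `SO(2,ℂ) = {k ∈ SL(2,ℂ) : k(Q) = Q}`. -/
def SO2C : Set SL2C := {k | ∀ x y : ℂ, gQ k x y = x ^ 2 + y ^ 2}

/-! ### Positivity of binary forms and openness -/

/-- Sylvester's criterion for a real binary quadratic form. -/
lemma posDef_iff (A B C : ℝ) :
    (∀ x y : ℝ, (x, y) ≠ (0, 0) → 0 < A * x ^ 2 + 2 * B * (x * y) + C * y ^ 2) ↔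
      0 < A ∧ 0 < A * C - B ^ 2 := by
  constructor
  · intro h
    have hA : 0 < A := by simpa using h 1 0 (by simp)
    refine ⟨hA, ?_⟩
    -- the value at `(-B, A)` is `A * (A * C - B ^ 2)`
    have h2 := h (-B) A (by simp [hA.ne'])
    have h3 : 0 < A * (A * C - B ^ 2) := by nlinarith
    exact (pos_iff_pos_of_mul_pos h3).1 hA
  · rintro ⟨hA, hD⟩ x y hxy
    have key : A * (A * x ^ 2 + 2 * B * (x * y) + C * y ^ 2)
        = (A * x + B * y) ^ 2 + (A * C - B ^ 2) * y ^ 2 := by ring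
    have h3 : 0 < A * (A * x ^ 2 + 2 * B * (x * y) + C * y ^ 2) := by
      rw [key]
      by_cases hy : y = 0
      · subst hy
        have hx : x ≠ 0 := by simpa using hxy
        have := mul_ne_zero hA.ne' hx
        simp only [mul_zero, add_zero]
        positivity
      · positivity
    exact (pos_iff_pos_of_mul_pos h3).1 hA

lemma mQ_re (m : Fin 2 → Fin 2 → ℂ) (x y : ℝ) :
    (mQ m x y).re = (m 0 0 ^ 2 + m 0 1 ^ 2).re * x ^ 2
      + 2 * (m 0 0 * m 1 0 + m 0 1 * m 1 1).re * (x * y)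
      + (m 1 0 ^ 2 + m 1 1 ^ 2).re * y ^ 2 := by
  simp [mQ, pow_two]
  ring

lemma forall_mQ_re_pos_iff (m : Fin 2 → Fin 2 → ℂ) :
    (∀ x y : ℝ, (x, y) ≠ (0, 0) → 0 < (mQ m x y).re) ↔
      0 < (m 0 0 ^ 2 + m 0 1 ^ 2).re ∧
      0 < (m 0 0 ^ 2 + m 0 1 ^ 2).re * (m 1 0 ^ 2 + m 1 1 ^ 2).re
        - (m 0 0 * m 1 0 + m 0 1 * m 1 1).re ^ 2 := by
  rw [← posDef_iff]
  simp only [mQ_re]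

lemma isOpen_forall_mQ_re_pos :
    IsOpen {m : Fin 2 → Fin 2 → ℂ | ∀ x y : ℝ, (x, y) ≠ (0, 0) → 0 < (mQ m x y).re} := by
  simp only [forall_mQ_re_pos_iff]
  refine IsOpen.and ?_ ?_ <;> refine isOpen_lt ?_ ?_ <;> fun_prop

lemma isOpen_USet : IsOpen USet :=
  isOpen_forall_mQ_re_pos.preimage
    (f := fun g : SL2C => (g.1 : Fin 2 → Fin 2 → ℂ)) continuous_subtype_val

/-! ### Stability under the two group actions -/

/-- `(h g)(Q)(v) = g(Q)(v h)`. -/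
lemma gQ_mul (h g : SL2C) (x y : ℂ) :
    gQ (h * g) x y = gQ g (x * h 0 0 + y * h 1 0) (x * h 0 1 + y * h 1 1) := by
  simp only [gQ, Matrix.SpecialLinearGroup.coe_mul, Matrix.mul_apply, Fin.sum_univ_two]
  ring

lemma gQ_eq_of_coeff {g g' : SL2C} (h1 : g 0 0 ^ 2 + g 0 1 ^ 2 = g' 0 0 ^ 2 + g' 0 1 ^ 2)
    (h2 : g 0 0 * g 1 0 + g 0 1 * g 1 1 = g' 0 0 * g' 1 0 + g' 0 1 * g' 1 1)
    (h3 : g 1 0 ^ 2 + g 1 1 ^ 2 = g' 1 0 ^ 2 + g' 1 1 ^ 2) (x y : ℂ) :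
    gQ g x y = gQ g' x y := by
  simp only [gQ]
  linear_combination x ^ 2 * h1 + 2 * x * y * h2 + y ^ 2 * h3

lemma SL2C_det (g : SL2C) : g 0 0 * g 1 1 - g 0 1 * g 1 0 = 1 := by
  have := g.det_coe
  rwa [Matrix.det_fin_two] at this

lemma toSL2C_apply (h : SL2R) (i j : Fin 2) : toSL2C h i j = ((h i j : ℝ) : ℂ) := rfl

lemma toSL2C_mul_mem {g : SL2C} (hg : g ∈ USet) (h : SL2R) : toSL2C h * g ∈ USet := by
  intro x y hxy
  have hd : h 0 0 * h 1 1 - h 0 1 * h 1 0 = 1 := by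
    have := h.det_coe
    rwa [Matrix.det_fin_two] at this
  have := hg (x * h 0 0 + y * h 1 0) (x * h 0 1 + y * h 1 1) (by
    intro h0
    apply hxy
    obtain ⟨e1, e2⟩ := Prod.mk.inj h0
    ext
    · show x = 0
      linear_combination h 1 1 * e1 - h 1 0 * e2 - x * hd
    · show y = 0
      linear_combination h 0 0 * e2 - h 0 1 * e1 - y * hd)
  rw [gQ_mul]
  simpa [toSL2C_apply] using this

lemma mul_SO2C_mem {g : SL2C} (hg : g ∈ USet) {k : SL2C} (hk : k ∈ SO2C) : g * k ∈ USet := by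
  intro x y hxy
  rw [gQ_mul, hk]
  exact hg x y hxy

lemma one_mem_USet : (1 : SL2C) ∈ USet := by
  intro x y hxy
  have := (posDef_iff 1 0 1).2 (by norm_num) x y hxy
  simpa [gQ, pow_two] using this

lemma toSL2C_mem (h : SL2R) : toSL2C h ∈ USet := by
  simpa using toSL2C_mul_mem one_mem_USet h

/-! ### The parametrisation of `U` -/

/-- The real lower triangular matrices of determinant one with positive diagonal. -/
noncomputable def lowerTri (a b : ℝ) : SL2R :=
  ⟨!![Real.exp a, 0; b, Real.exp (-a)], by simp [Matrix.det_fin_two, ← Real.exp_add]⟩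

/-- The complex rotation by `ζ`; these exhaust `SO(2,ℂ)` by `exists_rot_eq`. -/
noncomputable def rot (ζ : ℂ) : SL2C :=
  ⟨!![cos ζ, sin ζ; -sin ζ, cos ζ], by
    rw [Matrix.det_fin_two_of]
    linear_combination sin_sq_add_cos_sq ζ⟩

/-- The height of the point of the unit hemisphere with central projection `(P, Q)`. -/
noncomputable def height (P Q : ℝ) : ℝ := (Real.sqrt (1 + P ^ 2 + Q ^ 2))⁻¹

/-- The lower triangular `L` with `L Lᵀ = [[r + ip, iq], [iq, r - ip]]`, where
`(r, p, q) = (r, r P, r Q)` is the point of the unit hemisphere `r > 0` with central projection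
`(P, Q)`. The diagonal entries are `w, w⁻¹`, where `w` is the principal square root of `r + ip`. -/
noncomputable def cholesky (P Q : ℝ) : SL2C :=
  ⟨!![exp (log (height P Q * (1 + P * I)) / 2), 0;
      height P Q * Q * I * exp (-(log (height P Q * (1 + P * I)) / 2)),
      exp (-(log (height P Q * (1 + P * I)) / 2))], by
    simp [Matrix.det_fin_two, ← Complex.exp_add]⟩

/-- The parametrisation of `U` by `ℝ⁴ × ℂ`. -/
noncomputable def param (v : ℝ × ℝ × ℝ × ℝ × ℂ) : SL2C :=
  toSL2C (lowerTri v.1 v.2.1) * cholesky v.2.2.1 v.2.2.2.1 * rot v.2.2.2.2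

lemma height_pos (P Q : ℝ) : 0 < height P Q := by
  unfold height
  positivity

lemma height_sq (P Q : ℝ) : height P Q ^ 2 * (1 + P ^ 2 + Q ^ 2) = 1 := by
  unfold height
  rw [inv_pow, Real.sq_sqrt (by positivity)]
  exact inv_mul_cancel₀ (by positivity)

lemma continuous_param : Continuous param := by
  have hh : Continuous fun v : ℝ × ℝ × ℝ × ℝ × ℂ => height v.2.2.1 v.2.2.2.1 := by
    unfold height
    refine Continuous.inv₀ (by fun_prop) fun v => ?_
    positivity
  have hl : Continuous fun v : ℝ × ℝ × ℝ × ℝ × ℂ =>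
      log (height v.2.2.1 v.2.2.2.1 * (1 + v.2.2.1 * I)) / 2 := by
    refine Continuous.div_const (Continuous.clog (by fun_prop) fun v => Or.inl ?_) _
    simpa using height_pos _ _
  have h1 : Continuous fun v : ℝ × ℝ × ℝ × ℝ × ℂ => (toSL2C (lowerTri v.1 v.2.1)).1 := by
    refine continuous_matrix fun i j => ?_
    change Continuous fun v : ℝ × ℝ × ℝ × ℝ × ℂ => ((lowerTri v.1 v.2.1 i j : ℝ) : ℂ)
    fin_cases i <;> fin_cases j <;> simp [lowerTri] <;> fun_prop
  have h2 : Continuous fun v : ℝ × ℝ × ℝ × ℝ × ℂ => (cholesky v.2.2.1 v.2.2.2.1).1 := by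
    refine continuous_matrix fun i j => ?_
    fin_cases i <;> fin_cases j <;> simp [cholesky] <;> fun_prop
  have h3 : Continuous fun v : ℝ × ℝ × ℝ × ℝ × ℂ => (rot v.2.2.2.2).1 := by
    refine continuous_matrix fun i j => ?_
    fin_cases i <;> fin_cases j <;> simp [rot] <;> fun_prop
  exact Continuous.subtype_mk ((h1.mul h2).mul h3) _

lemma rot_mem (ζ : ℂ) : rot ζ ∈ SO2C := by
  intro x y
  simp only [gQ, rot, Matrix.of_apply, Matrix.cons_val', Matrix.cons_val_zero,
    Matrix.cons_val_one, Matrix.cons_val_fin_one]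
  linear_combination (x ^ 2 + y ^ 2) * sin_sq_add_cos_sq ζ

/-! ### Surjectivity of the parametrisation -/

lemma exists_rot_eq {k : SL2C} (hk : k ∈ SO2C) : ∃ ζ, rot ζ = k := by
  have e1 : k 0 0 ^ 2 + k 0 1 ^ 2 = 1 := by simpa [gQ] using hk 1 0
  have e2 : k 1 0 ^ 2 + k 1 1 ^ 2 = 1 := by simpa [gQ] using hk 0 1
  have e3 : k 0 0 * k 1 0 + k 0 1 * k 1 1 = 0 := by
    have h := hk 1 1
    simp only [gQ] at h
    linear_combination (h - e1 - e2) / 2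
  have hd := SL2C_det k
  have h11 : k 1 1 = k 0 0 := by
    linear_combination k 0 0 * hd - k 1 1 * e1 + k 0 1 * e3
  have h10 : k 1 0 = -k 0 1 := by
    linear_combination -k 0 1 * hd - k 1 0 * e1 + k 0 0 * e3
  have hm : (k 0 0 + k 0 1 * I) * (k 0 0 - k 0 1 * I) = 1 := by
    linear_combination e1 - k 0 1 ^ 2 * I_sq
  have hne : k 0 0 + k 0 1 * I ≠ 0 := left_ne_zero_of_mul_eq_one hm
  have hexp : exp (-log (k 0 0 + k 0 1 * I)) = k 0 0 - k 0 1 * I := by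
    rw [Complex.exp_neg, exp_log hne]
    exact inv_eq_of_mul_eq_one_right hm
  -- `ζ` is chosen so that `exp (ζ * I) = k 0 0 + k 0 1 * I`
  have hζ : (-I * log (k 0 0 + k 0 1 * I)) * I = log (k 0 0 + k 0 1 * I) := by
    linear_combination -log (k 0 0 + k 0 1 * I) * I_sq
  have hc : cos (-I * log (k 0 0 + k 0 1 * I)) = k 0 0 := by
    rw [Complex.cos, neg_mul (-I * log _), hζ, hexp, exp_log hne]
    ring
  have hs : sin (-I * log (k 0 0 + k 0 1 * I)) = k 0 1 := by
    rw [Complex.sin, neg_mul (-I * log _), hζ, hexp, exp_log hne]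
    linear_combination -k 0 1 * I_sq
  refine ⟨-I * log (k 0 0 + k 0 1 * I), ?_⟩
  ext i j
  fin_cases i <;> fin_cases j
  · exact hc
  · exact hs
  · exact (congrArg Neg.neg hs).trans h10.symm
  · exact hc.trans h11.symm

/-- Elements with the same form lie in the same left coset of `SO(2,ℂ)`. -/
lemma inv_mul_mem_SO2C {g g' : SL2C} (h : ∀ x y, gQ g x y = gQ g' x y) : g⁻¹ * g' ∈ SO2C := by
  intro x y
  rw [gQ_mul, ← h, ← gQ_mul, inv_mul_cancel]
  simp [gQ]

lemma cholesky_coeff (P Q : ℝ) :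
    cholesky P Q 0 0 ^ 2 + cholesky P Q 0 1 ^ 2 = height P Q * (1 + P * I) ∧
    cholesky P Q 0 0 * cholesky P Q 1 0 + cholesky P Q 0 1 * cholesky P Q 1 1
      = height P Q * Q * I ∧
    cholesky P Q 1 0 ^ 2 + cholesky P Q 1 1 ^ 2 = height P Q * (1 - P * I) := by
  have hz : (height P Q * (1 + P * I) : ℂ) ≠ 0 := by
    intro h
    have := congrArg re h
    simp [(height_pos P Q).ne'] at this
  have hw : exp (log (height P Q * (1 + P * I)) / 2) ^ 2 = height P Q * (1 + P * I) := by
    rw [← Complex.exp_nat_mul]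
    push_cast
    rw [mul_div_cancel₀ _ two_ne_zero, exp_log hz]
  have hww : exp (log (height P Q * (1 + P * I)) / 2)
      * exp (-(log (height P Q * (1 + P * I)) / 2)) = 1 := by
    rw [← Complex.exp_add, add_neg_cancel, Complex.exp_zero]
  have hr : (height P Q : ℂ) ^ 2 * (1 + P ^ 2 + Q ^ 2) = 1 := by
    exact_mod_cast height_sq P Q
  simp only [cholesky, Matrix.of_apply, Matrix.cons_val', Matrix.cons_val_zero,
    Matrix.cons_val_one, Matrix.cons_val_fin_one]
  generalize exp (log (height P Q * (1 + P * I)) / 2) = w at *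
  generalize exp (-(log (height P Q * (1 + P * I)) / 2)) = w' at *
  refine ⟨by linear_combination hw, by linear_combination height P Q * Q * I * hww, ?_⟩
  have hw2 : (height P Q * (1 + P * I)) * w' ^ 2 = 1 := by
    rw [← hw]
    linear_combination (w * w' + 1) * hww
  apply mul_left_cancel₀ hz
  have hI := I_sq
  linear_combination ((height P Q * Q * I) ^ 2 + 1) * hw2 - hr
    + (height P Q : ℂ) ^ 2 * (Q ^ 2 + P ^ 2) * hI

lemma cholesky_mem (P Q : ℝ) : cholesky P Q ∈ USet := by
  obtain ⟨h1, h2, h3⟩ := cholesky_coeff P Q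
  refine (forall_mQ_re_pos_iff (cholesky P Q).1).2 ?_
  have hr := height_pos P Q
  rw [h1, h2, h3]
  simpa using ⟨hr, hr.ne'⟩

lemma param_mem (v : ℝ × ℝ × ℝ × ℝ × ℂ) : param v ∈ USet := by
  unfold param
  rw [mul_assoc]
  exact toSL2C_mul_mem (mul_SO2C_mem (cholesky_mem _ _) (rot_mem _)) _

/-- Reduction of the real part of `g(Q)` to a multiple of `x² + y²` by completing the square. -/
lemma exists_lowerTri_mul {g : SL2C} (hg : g ∈ USet) : ∃ a b r : ℝ, 0 < r ∧
    ∀ x y : ℝ, (gQ (toSL2C (lowerTri a b) * g) x y).re = r * (x ^ 2 + y ^ 2) := by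
  obtain ⟨hA, hD⟩ := (forall_mQ_re_pos_iff g.1).1 hg
  have hre := mQ_re g.1
  set A := (g.1 0 0 ^ 2 + g.1 0 1 ^ 2).re
  set B := (g.1 0 0 * g.1 1 0 + g.1 0 1 * g.1 1 1).re
  set C := (g.1 1 0 ^ 2 + g.1 1 1 ^ 2).re
  set r := Real.sqrt (A * C - B ^ 2)
  have hr : 0 < r := Real.sqrt_pos.2 hD
  have hr2 : r ^ 2 = A * C - B ^ 2 := Real.sq_sqrt hD.le
  -- `e` is the inverse of the first diagonal entry, and `e ^ 2 = A / r`
  obtain ⟨a, e, he, he1, he2, hea⟩ : ∃ a e : ℝ, 0 < e ∧ Real.exp a = e⁻¹ ∧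
      Real.exp (-a) = e ∧ e ^ 2 * r = A := by
    refine ⟨-(Real.log (A / r) / 2), Real.exp (Real.log (A / r) / 2), Real.exp_pos _,
      Real.exp_neg _, by rw [neg_neg], ?_⟩
    rw [← Real.exp_nat_mul]
    push_cast
    rw [mul_div_cancel₀ _ two_ne_zero, Real.exp_log (by positivity), div_mul_cancel₀ _ hr.ne']
  refine ⟨a, -(e * B / A), r, hr, fun x y => ?_⟩
  have hx := hre (x * e⁻¹ + y * -(e * B / A)) (y * e)
  have hrw : gQ (toSL2C (lowerTri a (-(e * B / A))) * g) x y
      = mQ g.1 (x * e⁻¹ + y * -(e * B / A) : ℝ) (y * e : ℝ) := by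
    rw [gQ_mul]
    change mQ g.1 (x * (Real.exp a : ℝ) + y * (-(e * B / A) : ℝ))
      (x * (0 : ℝ) + y * (Real.exp (-a) : ℝ)) = _
    rw [he1, he2]
    push_cast
    rw [mul_zero, zero_add]
  rw [hrw, hx]
  have hC : C = (r ^ 2 + B ^ 2) / A := by
    field_simp
    linarith
  rw [hC, ← hea]
  field_simp
  ring

/-- An element whose form has real part `r (x² + y²)` has the form of some `cholesky P Q`. -/
lemma exists_cholesky {g : SL2C} {r : ℝ} (hr : 0 < r)
    (h : ∀ x y : ℝ, (gQ g x y).re = r * (x ^ 2 + y ^ 2)) :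
    ∃ P Q : ℝ, ∀ x y, gQ (cholesky P Q) x y = gQ g x y := by
  have h' : ∀ x y : ℝ, (mQ g.1 x y).re = r * (x ^ 2 + y ^ 2) := h
  have hd := SL2C_det g
  obtain ⟨S, hS⟩ : ∃ S, S = g 0 0 ^ 2 + g 0 1 ^ 2 := ⟨_, rfl⟩
  obtain ⟨M, hM⟩ : ∃ M, M = g 0 0 * g 1 0 + g 0 1 * g 1 1 := ⟨_, rfl⟩
  obtain ⟨T, hT⟩ : ∃ T, T = g 1 0 ^ 2 + g 1 1 ^ 2 := ⟨_, rfl⟩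
  have hdet : S * T - M ^ 2 = 1 := by
    rw [hS, hM, hT]
    linear_combination (g 0 0 * g 1 1 - g 0 1 * g 1 0 + 1) * hd
  have hform : ∀ x y : ℝ, S.re * x ^ 2 + 2 * M.re * (x * y) + T.re * y ^ 2
      = r * (x ^ 2 + y ^ 2) := by
    intro x y
    have := mQ_re g.1 x y
    rw [h'] at this
    rw [hS, hM, hT]
    exact this.symm
  have hSr : S.re = r := by simpa using hform 1 0
  have hTr : T.re = r := by simpa using hform 0 1
  have hMr : M.re = 0 := by
    have := hform 1 1
    rw [hSr, hTr] at this
    linarith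
  have hdre := congrArg re hdet
  have hdim := congrArg im hdet
  simp [pow_two, hSr, hTr, hMr] at hdre hdim
  have hTi : T.im = -S.im := by
    have : r * (T.im + S.im) = 0 := by linarith
    have := (mul_eq_zero.1 this).resolve_left hr.ne'
    linarith
  rw [hTi] at hdre
  have hH : height (S.im / r) (M.im / r) = r := by
    have : 1 + (S.im / r) ^ 2 + (M.im / r) ^ 2 = (r⁻¹) ^ 2 := by
      field_simp
      linarith
    rw [height, this, Real.sqrt_sq (by positivity), inv_inv]
  obtain ⟨c1, c2, c3⟩ := cholesky_coeff (S.im / r) (M.im / r)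
  rw [hH] at c1 c2 c3
  refine ⟨S.im / r, M.im / r, gQ_eq_of_coeff ?_ ?_ ?_⟩
  · rw [c1, ← hS]
    apply Complex.ext <;> simp [hSr]
    field_simp
  · rw [c2, ← hM]
    apply Complex.ext <;> simp [hMr]
    field_simp
  · rw [c3, ← hT]
    apply Complex.ext <;> simp [hTr, hTi]
    field_simp

lemma lowerTri_inv (a b : ℝ) : (lowerTri a b)⁻¹ = lowerTri (-a) (-b) := by
  rw [inv_eq_iff_mul_eq_one]
  apply Subtype.ext
  change !![Real.exp a, 0; b, Real.exp (-a)] * !![Real.exp (-a), 0; -b, Real.exp (- -a)] = 1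
  rw [Matrix.mul_fin_two, Matrix.one_fin_two]
  simp [← Real.exp_add, mul_comm b]

lemma range_param : Set.range param = USet := by
  refine Set.Subset.antisymm (Set.range_subset_iff.2 param_mem) fun g hg => ?_
  obtain ⟨a, b, r, hr, h⟩ := exists_lowerTri_mul hg
  obtain ⟨P, Q, hPQ⟩ := exists_cholesky hr h
  obtain ⟨ζ, hζ⟩ := exists_rot_eq (inv_mul_mem_SO2C hPQ)
  refine ⟨(-a, -b, P, Q, ζ), ?_⟩
  simp only [param, hζ, ← lowerTri_inv, map_inv]
  group

lemma isConnected_USet : IsConnected USet := by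
  rw [← range_param]
  exact isConnected_range continuous_param


/-- `U` is open and connected in `SL(2,ℂ)`, contains `SL(2,ℝ)`, is stable
under left multiplication by `SL(2,ℝ)` and right multiplication by `SO(2,ℂ)`;
for `g ∈ U` the form `g(Q)` has positive real part on `ℝ² ∖ 0`, so that for
each `λ ∈ ℂ` and each `(x,y) ∈ ℝ² ∖ 0` the function
`g ↦ (g(Q)(x,y))^{(λ−1)/2}` (principal branch) is well defined and holomorphic
on `U`: concretely, it is complex-differentiable on the corresponding open set
of the ambient matrix space. -/
theorem stmt16 (lam : ℂ) :
    IsOpen USet ∧ IsConnected USet ∧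
    (∀ g₁ : SL2R, toSL2C g₁ ∈ USet) ∧
    (∀ g ∈ USet, ∀ g₁ : SL2R, toSL2C g₁ * g ∈ USet) ∧
    (∀ g ∈ USet, ∀ k ∈ SO2C, g * k ∈ USet) ∧
    (∀ g ∈ USet, ∀ x y : ℝ, (x, y) ≠ (0, 0) → 0 < (gQ g (x : ℂ) (y : ℂ)).re) ∧
    (∀ x y : ℝ, (x, y) ≠ (0, 0) →
      IsOpen {m : Fin 2 → Fin 2 → ℂ | ∀ x' y' : ℝ, (x', y') ≠ (0, 0) →
        0 < (mQ m (x' : ℂ) (y' : ℂ)).re} ∧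
      DifferentiableOn ℂ
        (fun m : Fin 2 → Fin 2 → ℂ => mQ m (x : ℂ) (y : ℂ) ^ ((lam - 1) / 2))
        {m : Fin 2 → Fin 2 → ℂ | ∀ x' y' : ℝ, (x', y') ≠ (0, 0) →
          0 < (mQ m (x' : ℂ) (y' : ℂ)).re}) := by
  refine ⟨isOpen_USet, isConnected_USet, toSL2C_mem, fun g hg h => toSL2C_mul_mem hg h,
    fun g hg k hk => mul_SO2C_mem hg hk, fun g hg => hg, fun x y hxy =>
    ⟨isOpen_forall_mQ_re_pos, fun m hm => ?_⟩⟩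
  have hd : DifferentiableAt ℂ (fun m : Fin 2 → Fin 2 → ℂ => mQ m (x : ℂ) (y : ℂ)) m := by
    unfold mQ
    fun_prop
  exact (hd.cpow (differentiableAt_const _) (Or.inl (hm x y hxy))).differentiableWithinAt
end

section
/- For each λ ∈ (−1, 0) there exists a constant C > 0 such that for all ε ∈ (0, 1/2), the double integral ∫_ℝ ∫_ℝ |x − x′|^{−λ−1}·u_ε(x)·conj(u_ε(x′)) dx dx′ (which converges and is a nonnegative real number, being the squared complementary-series norm of u_ε) is at most C·|log ε|. -/
/-! The integral is dominated by `∫∫ |x - y|^(-λ-1) |u_ε(x)| |u_ε(y)| dx dy`. The Schur test with the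
weight `|x|^((λ-1)/2)`, which is compatible with the homogeneity of the kernel, bounds this by a
constant times `∫ |u_ε(x)|² |x|^(-λ) dx` (`riesz_schur`). Since `|q_ε(x)|` is at least
`M = ((x² + ε²)(1 + ε²x²))^(1/2)` and `|x| ≤ M`, the last integrand is at most `1 / M`
(`norm_sq_mul_le_majorant`), and `∫ 1 / M` is at most `4 + 4 |log ε|` (`integral_majorant_le`), the
logarithm coming from `ε < |x| < 1/ε`.

That the integral is real and nonnegative follows from the Riesz composition formula
`∫ |x - z|^(-p) |z - y|^(-p) dz = B(p, p) |x - y|^(1 - 2p)` (`integral_riesz`) with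
`p = (λ + 2)/2`: by Fubini it equals `B(p, p)⁻¹ ∫ |∫ |x - z|^(-p) u_ε(x) dx|² dz`
(`riesz_energy_nonneg`).
-/

open MeasureTheory Real Complex

/-- The positive constant making the quadratic form
`a·(x − iεy)(εx + iy)` on `ℂ²` have determinant `1`. -/
noncomputable def aEps (ε : ℝ) : ℝ := 1 / Real.sqrt (ε ^ 2 + (1 - ε ^ 2) ^ 2 / 4)

/-- `q_ε(x) = a_ε·(x − iε)(εx + i)`. -/
noncomputable def qEps (ε : ℝ) (x : ℝ) : ℂ :=
  (aEps ε : ℂ) * ((x : ℂ) - (ε : ℂ) * Complex.I) * ((ε : ℂ) * (x : ℂ) + Complex.I)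

/-! ### Riesz kernels on the line -/

/-- The beta-type integrand `|t|^(-a) |1 - t|^(-b)`. -/
noncomputable def betaFun (a b t : ℝ) : ℝ := |t| ^ (-a) * |1 - t| ^ (-b)

lemma betaFun_nonneg (a b t : ℝ) : 0 ≤ betaFun a b t := by
  unfold betaFun; positivity

lemma integrableOn_abs_rpow {a : ℝ} (ha : a < 1) :
    IntegrableOn (fun t : ℝ => |t| ^ (-a)) (Set.Icc (-1) 1) := by
  have h : LocallyIntegrable (fun t : ℝ => |t| ^ (-a)) volume := by
    refine locallyIntegrable_of_norm_le_rpow (C := 1) (α := a) (by simp) (by simpa using ha)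
      (Filter.Eventually.of_forall fun x => ?_)
      (by fun_prop : Measurable _).aestronglyMeasurable
    rw [one_mul, Real.norm_eq_abs, Real.norm_eq_abs, abs_of_nonneg (by positivity)]
  exact h.integrableOn_isCompact isCompact_Icc

lemma integrable_betaFun {a b : ℝ} (ha0 : 0 < a) (ha : a < 1) (hb0 : 0 < b) (hb : b < 1)
    (hab : 1 < a + b) : Integrable (betaFun a b) := by
  have h1 : Integrable (fun t : ℝ =>
      (2 : ℝ) ^ b * (Set.Icc (-1 : ℝ) 1).indicator (fun t : ℝ => |t| ^ (-a)) t) :=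
    ((integrable_indicator_iff measurableSet_Icc).2 (integrableOn_abs_rpow ha)).const_mul _
  have h2 : Integrable (fun t : ℝ =>
      (2 : ℝ) ^ a * (Set.Icc (-1 : ℝ) 1).indicator (fun t : ℝ => |t| ^ (-b)) (1 - t)) :=
    (((integrable_indicator_iff measurableSet_Icc).2
      (integrableOn_abs_rpow hb)).comp_sub_left 1).const_mul _
  have h3 : Integrable (fun t : ℝ =>
      (3 : ℝ) ^ a * 5 ^ b * (1 + ‖t‖) ^ (-(a + b))) :=
    (integrable_one_add_norm (by simpa using hab)).const_mul _
  refine ((h1.add h2).add h3).mono'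
    (by unfold betaFun; exact (by fun_prop : Measurable _).aestronglyMeasurable)
    (Filter.Eventually.of_forall fun t => ?_)
  rw [Real.norm_eq_abs, abs_of_nonneg (betaFun_nonneg a b t)]
  simp only [Pi.add_apply]
  have n1 : 0 ≤ (2 : ℝ) ^ b * (Set.Icc (-1 : ℝ) 1).indicator (fun t : ℝ => |t| ^ (-a)) t :=
    mul_nonneg (by positivity) (Set.indicator_nonneg (fun _ _ => by positivity) _)
  have n2 : 0 ≤ (2 : ℝ) ^ a *
      (Set.Icc (-1 : ℝ) 1).indicator (fun t : ℝ => |t| ^ (-b)) (1 - t) :=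
    mul_nonneg (by positivity) (Set.indicator_nonneg (fun _ _ => by positivity) _)
  have n3 : 0 ≤ (3 : ℝ) ^ a * 5 ^ b * (1 + ‖t‖) ^ (-(a + b)) := by positivity
  -- A lower bound `s ≤ c * r` on `r` gives an upper bound on `r ^ (-e)`.
  have key : ∀ {s r c e : ℝ}, 0 < s → 0 < c → 0 < e → s ≤ c * r →
      r ^ (-e) ≤ c ^ e * s ^ (-e) := by
    intro s r c e hs hc he h
    have hr : s / c ≤ r := by rwa [div_le_iff₀' hc]
    calc r ^ (-e) ≤ (s / c) ^ (-e) :=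
          Real.rpow_le_rpow_of_nonpos (by positivity) hr (by linarith)
      _ = c ^ e * s ^ (-e) := by
          rw [Real.div_rpow hs.le hc.le, Real.rpow_neg hc.le, div_inv_eq_mul, mul_comm]
  unfold betaFun
  rcases le_or_gt |t| (1 / 2) with ht | ht
  · have hmem : t ∈ Set.Icc (-1 : ℝ) 1 := by rw [abs_le] at ht; constructor <;> linarith
    have : |1 - t| ^ (-b) ≤ 2 ^ b * 1 ^ (-b) := key one_pos two_pos hb0 (by
      have := le_abs_self (1 - t); have := le_abs_self t; linarith)
    rw [Real.one_rpow, mul_one] at this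
    have h4 : |t| ^ (-a) * |1 - t| ^ (-b) ≤
        (2 : ℝ) ^ b * (Set.Icc (-1 : ℝ) 1).indicator (fun t : ℝ => |t| ^ (-a)) t := by
      rw [Set.indicator_of_mem hmem, mul_comm]
      gcongr
    linarith
  rcases le_or_gt |1 - t| (1 / 2) with ht' | ht'
  · have hmem : 1 - t ∈ Set.Icc (-1 : ℝ) 1 := by rw [abs_le] at ht'; constructor <;> linarith
    have : |t| ^ (-a) ≤ 2 ^ a * 1 ^ (-a) := key one_pos two_pos ha0 (by linarith)
    rw [Real.one_rpow, mul_one] at this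
    have h4 : |t| ^ (-a) * |1 - t| ^ (-b) ≤
        (2 : ℝ) ^ a * (Set.Icc (-1 : ℝ) 1).indicator (fun t : ℝ => |t| ^ (-b)) (1 - t) := by
      rw [Set.indicator_of_mem hmem]
      gcongr
    linarith
  · have k1 : |t| ^ (-a) ≤ 3 ^ a * (1 + ‖t‖) ^ (-a) :=
      key (by positivity) (by norm_num) ha0 (by rw [Real.norm_eq_abs]; linarith)
    have k2 : |1 - t| ^ (-b) ≤ 5 ^ b * (1 + ‖t‖) ^ (-b) :=
      key (by positivity) (by norm_num) hb0 (by
        rw [Real.norm_eq_abs]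
        have := abs_sub_abs_le_abs_sub t 1
        rw [abs_sub_comm, abs_one] at this
        linarith)
    have h4 : |t| ^ (-a) * |1 - t| ^ (-b) ≤ 3 ^ a * 5 ^ b * (1 + ‖t‖) ^ (-(a + b)) := by
      calc _ ≤ (3 ^ a * (1 + ‖t‖) ^ (-a)) * (5 ^ b * (1 + ‖t‖) ^ (-b)) := by gcongr
        _ = _ := by
          rw [neg_add, Real.rpow_add (by positivity)]; ring
    linarith

/-- The constant `B(a, b) = ∫ |t|^(-a) |1 - t|^(-b) dt`. -/
noncomputable def betaConst (a b : ℝ) : ℝ := ∫ t, betaFun a b t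

lemma betaConst_pos {a b : ℝ} (ha0 : 0 < a) (ha : a < 1) (hb0 : 0 < b) (hb : b < 1)
    (hab : 1 < a + b) : 0 < betaConst a b := by
  unfold betaConst
  rw [integral_pos_iff_support_of_nonneg (betaFun_nonneg a b)
    (integrable_betaFun ha0 ha hb0 hb hab)]
  refine lt_of_lt_of_le (b := volume (Set.Ioo (0 : ℝ) 1)) (by simp) (measure_mono fun t ht => ?_)
  have h1 : 0 < |t| := abs_pos.2 ht.1.ne'
  have h2 : 0 < |1 - t| := abs_pos.2 (sub_pos.2 ht.2).ne'
  rw [Function.mem_support]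
  unfold betaFun
  positivity

lemma riesz_eq_betaFun (a b : ℝ) {x y : ℝ} (hxy : x ≠ y) (z : ℝ) :
    |x - z| ^ (-a) * |z - y| ^ (-b) =
      |x - y| ^ (-(a + b)) * betaFun a b ((x - z) * (x - y)⁻¹) := by
  have hd : x - y ≠ 0 := sub_ne_zero.2 hxy
  have hd' : 0 < |x - y| := abs_pos.2 hd
  have e : 1 - (x - z) * (x - y)⁻¹ = (z - y) * (x - y)⁻¹ := by field_simp; ring
  unfold betaFun
  rw [e, abs_mul, abs_mul, abs_inv, Real.mul_rpow (abs_nonneg _) (by positivity),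
    Real.mul_rpow (abs_nonneg _) (by positivity), Real.inv_rpow hd'.le, Real.inv_rpow hd'.le,
    neg_add, Real.rpow_add hd']
  have := (Real.rpow_pos_of_pos hd' (-a)).ne'
  have := (Real.rpow_pos_of_pos hd' (-b)).ne'
  field_simp

lemma integrable_riesz {a b : ℝ} (ha0 : 0 < a) (ha : a < 1) (hb0 : 0 < b) (hb : b < 1)
    (hab : 1 < a + b) {x y : ℝ} (hxy : x ≠ y) :
    Integrable (fun z => |x - z| ^ (-a) * |z - y| ^ (-b)) := by
  simp_rw [riesz_eq_betaFun a b hxy]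
  exact (((integrable_betaFun ha0 ha hb0 hb hab).comp_mul_right'
    (inv_ne_zero (sub_ne_zero.2 hxy))).comp_sub_left x).const_mul _

/-- Riesz composition: convolving two one-dimensional Riesz kernels gives a multiple of a third,
by translation and scaling to the beta integral. -/
lemma integral_riesz (a b : ℝ) {x y : ℝ} (hxy : x ≠ y) :
    ∫ z, |x - z| ^ (-a) * |z - y| ^ (-b) = betaConst a b * |x - y| ^ (1 - a - b) := by
  simp_rw [riesz_eq_betaFun a b hxy]
  have hd' : 0 < |x - y| := abs_pos.2 (sub_ne_zero.2 hxy)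
  rw [integral_const_mul, integral_sub_left_eq_self (fun z => betaFun a b (z * (x - y)⁻¹)) volume x,
    Measure.integral_comp_mul_right, inv_inv, smul_eq_mul,
    show 1 - a - b = -(a + b) + 1 by ring, Real.rpow_add hd', Real.rpow_one]
  unfold betaConst
  ring

/-! ### Positivity of the Riesz energy -/

/-- An absolutely convergent Riesz energy is real and nonnegative: by Riesz composition the kernel
`|x - y|^(1 - 2p)` is, up to the factor `B(p, p)`, the convolution square of `|x - y|^(-p)`, so the
energy is a squared `L²` norm. -/
lemma riesz_energy_nonneg {p : ℝ} (hp0 : 1 / 2 < p) (hp : p < 1) {u : ℝ → ℂ} (hu : Measurable u)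
    (hint : Integrable (fun q : ℝ × ℝ => ((|q.1 - q.2| ^ (1 - p - p) : ℝ) : ℂ) * u q.1 *
      (starRingEnd ℂ) (u q.2)) (volume.prod volume)) :
    ∃ r : ℝ, 0 ≤ r ∧ ∫ q : ℝ × ℝ, ((|q.1 - q.2| ^ (1 - p - p) : ℝ) : ℂ) * u q.1 *
      (starRingEnd ℂ) (u q.2) ∂(volume.prod volume) = (r : ℂ) := by
  have hB : 0 < betaConst p p := betaConst_pos (by linarith) hp (by linarith) hp (by linarith)
  set H : (ℝ × ℝ) × ℝ → ℂ := fun w =>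
    ((|w.1.1 - w.2| ^ (-p) * |w.2 - w.1.2| ^ (-p) : ℝ) : ℂ) *
      (u w.1.1 * (starRingEnd ℂ) (u w.1.2)) with hH
  have hHm : Measurable H := by
    have hc : Measurable (starRingEnd ℂ) := Complex.continuous_conj.measurable
    fun_prop
  have hdiag : ∀ᵐ q : ℝ × ℝ ∂(volume.prod volume), q.1 ≠ q.2 := by
    rw [Measure.ae_prod_iff_ae_ae]
    · exact Filter.Eventually.of_forall fun x => by
        filter_upwards [Measure.ae_ne volume x] with y hy using hy.symm
    · exact (measurableSet_eq_fun measurable_fst measurable_snd).compl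
  have hHint : Integrable H ((volume.prod volume).prod volume) := by
    rw [integrable_prod_iff hHm.aestronglyMeasurable]
    constructor
    · filter_upwards [hdiag] with q hq
      have hr : Integrable (fun z => ((|q.1 - z| ^ (-p) * |z - q.2| ^ (-p) : ℝ) : ℂ)) :=
        (integrable_riesz (by linarith) hp (by linarith) hp (by linarith) hq).ofReal
      exact hr.mul_const (u q.1 * (starRingEnd ℂ) (u q.2))
    · refine (hint.norm.const_mul (betaConst p p)).congr ?_
      filter_upwards [hdiag] with q hq
      have e : ∀ z, ‖H (q, z)‖ =
          (|q.1 - z| ^ (-p) * |z - q.2| ^ (-p)) * ‖u q.1 * (starRingEnd ℂ) (u q.2)‖ := by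
        intro z
        rw [hH, norm_mul, Complex.norm_real, Real.norm_eq_abs, abs_of_nonneg (by positivity)]
      simp_rw [e]
      rw [integral_mul_const, integral_riesz _ _ hq, mul_assoc (Complex.ofReal _), norm_mul,
        Complex.norm_real, Real.norm_eq_abs, abs_of_nonneg (by positivity)]
      ring
  have e1 : ∫ w, H w ∂((volume.prod volume).prod volume) =
      (betaConst p p : ℂ) * ∫ q : ℝ × ℝ, ((|q.1 - q.2| ^ (1 - p - p) : ℝ) : ℂ) * u q.1 *
      (starRingEnd ℂ) (u q.2) ∂(volume.prod volume) := by
    rw [integral_prod _ hHint, ← integral_const_mul]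
    refine integral_congr_ae ?_
    filter_upwards [hdiag] with q hq
    simp only [hH]
    rw [integral_mul_const, integral_complex_ofReal, integral_riesz _ _ hq]
    push_cast
    ring
  have e2 : ∫ w, H w ∂((volume.prod volume).prod volume) =
      ((∫ z, Complex.normSq (∫ x, ((|x - z| ^ (-p) : ℝ) : ℂ) * u x) : ℝ) : ℂ) := by
    rw [integral_prod_symm _ hHint, ← integral_complex_ofReal]
    congr 1
    ext z
    have e3 : ∀ q : ℝ × ℝ, H (q, z) = (((|q.1 - z| ^ (-p) : ℝ) : ℂ) * u q.1) *
        (starRingEnd ℂ) (((|q.2 - z| ^ (-p) : ℝ) : ℂ) * u q.2) := by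
      intro q
      simp only [hH, map_mul, Complex.conj_ofReal, abs_sub_comm q.2 z]
      push_cast
      ring
    simp_rw [e3]
    rw [integral_prod_mul (fun x => ((|x - z| ^ (-p) : ℝ) : ℂ) * u x)
      (fun x => (starRingEnd ℂ) (((|x - z| ^ (-p) : ℝ) : ℂ) * u x)), integral_conj,
      Complex.mul_conj]
  refine ⟨(betaConst p p)⁻¹ * ∫ z, Complex.normSq (∫ x, ((|x - z| ^ (-p) : ℝ) : ℂ) * u x),
    mul_nonneg (inv_nonneg.2 hB.le) (integral_nonneg fun z => Complex.normSq_nonneg _), ?_⟩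
  rw [Complex.ofReal_mul, ← e2, e1, ← mul_assoc, ← Complex.ofReal_mul, inv_mul_cancel₀ hB.ne']
  simp

/-! ### The Schur test -/

/-- Schur test for the kernel `|x - y|^(-lam - 1)` with the weight `w(x) = |x|^(-(1 - lam) / 2)`:
integrating `w` against the kernel reproduces `w` up to the factor `B |x|^(-lam)`,
where `B = B(lam + 1, (1 - lam) / 2)`. -/
lemma riesz_schur {lam : ℝ} (h0 : -1 < lam) (h1 : lam < 0) {v h : ℝ → ℝ} (hv : Measurable v)
    (hv0 : ∀ x, 0 ≤ v x) (hh : Integrable h) (hvh : ∀ x, v x ^ 2 * |x| ^ (-lam) ≤ h x) :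
    ∫⁻ q : ℝ × ℝ, ENNReal.ofReal (|q.1 - q.2| ^ (-lam - 1) * v q.1 * v q.2)
      ∂(volume.prod volume) ≤
      ENNReal.ofReal (2 * betaConst (lam + 1) ((1 - lam) / 2) * ∫ x, h x) := by
  set b : ℝ := (1 - lam) / 2 with hb
  set B := betaConst (lam + 1) b with hBdef
  have hB : 0 < B :=
    betaConst_pos (by linarith) (by linarith) (by linarith) (by linarith) (by linarith)
  have hh0 : ∀ x, 0 ≤ h x := fun x => le_trans (by positivity) (hvh x)
  set F : ℝ × ℝ → ENNReal := fun q => ENNReal.ofReal (v q.1 ^ 2 * |q.1| ^ b) *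
    ENNReal.ofReal (|q.1 - q.2| ^ (-(lam + 1)) * |q.2 - 0| ^ (-b)) with hF
  have hFm : Measurable F := by fun_prop
  have hne : ∀ᵐ q : ℝ × ℝ ∂(volume.prod volume), q.1 ≠ 0 ∧ q.2 ≠ 0 := by
    rw [Measure.ae_prod_iff_ae_ae]
    · filter_upwards [Measure.ae_ne volume (0 : ℝ)] with x hx
      filter_upwards [Measure.ae_ne volume (0 : ℝ)] with y hy using ⟨hx, hy⟩
    · exact (measurableSet_eq_fun measurable_fst measurable_const).compl.inter
        (measurableSet_eq_fun measurable_snd measurable_const).compl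
  have hpt : ∀ᵐ q : ℝ × ℝ ∂(volume.prod volume),
      ENNReal.ofReal (|q.1 - q.2| ^ (-lam - 1) * v q.1 * v q.2) ≤ F q + F q.swap := by
    filter_upwards [hne] with q hq
    obtain ⟨hx, hy⟩ := hq
    have hx' : 0 < |q.1| := abs_pos.2 hx
    have hy' : 0 < |q.2| := abs_pos.2 hy
    simp only [hF, Prod.fst_swap, Prod.snd_swap, sub_zero]
    rw [← ENNReal.ofReal_mul (by positivity), ← ENNReal.ofReal_mul (by positivity),
      ← ENNReal.ofReal_add (by positivity) (by positivity)]
    refine ENNReal.ofReal_le_ofReal ?_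
    rw [abs_sub_comm q.2 q.1, show -lam - 1 = -(lam + 1) by ring, Real.rpow_neg hx'.le,
      Real.rpow_neg hy'.le]
    have hX : 0 < |q.1| ^ b := by positivity
    have hY : 0 < |q.2| ^ b := by positivity
    have hK : 0 ≤ |q.1 - q.2| ^ (-(lam + 1)) := by positivity
    generalize |q.1| ^ b = X at *
    generalize |q.2| ^ b = Y at *
    generalize |q.1 - q.2| ^ (-(lam + 1)) = K at *
    have hp := hv0 q.1
    have hr := hv0 q.2
    generalize v q.1 = p at *
    generalize v q.2 = r at *
    -- The weighted inequality `p r ≤ p² (X / Y) + r² (Y / X)`, with `X / Y` the ratio of weights.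
    have : p * r ≤ p ^ 2 * X * Y⁻¹ + r ^ 2 * Y * X⁻¹ := by
      have e : p ^ 2 * X * Y⁻¹ + r ^ 2 * Y * X⁻¹ - p * r
          = ((p * X - r * Y) ^ 2 + (p * X) * (r * Y)) / (X * Y) := by
        field_simp; ring
      have : 0 ≤ ((p * X - r * Y) ^ 2 + (p * X) * (r * Y)) / (X * Y) := by positivity
      linarith
    nlinarith [mul_le_mul_of_nonneg_left this hK]
  have hFint : ∫⁻ q, F q ∂(volume.prod volume) ≤ ENNReal.ofReal (B * ∫ x, h x) := by
    rw [lintegral_prod _ hFm.aemeasurable, ← integral_const_mul,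
      ofReal_integral_eq_lintegral_ofReal (hh.const_mul _)
        (Filter.Eventually.of_forall fun x => mul_nonneg hB.le (hh0 x))]
    refine lintegral_mono_ae ?_
    filter_upwards [Measure.ae_ne volume (0 : ℝ)] with x hx
    have hx' : 0 < |x| := abs_pos.2 hx
    simp only [hF]
    rw [lintegral_const_mul _ (by fun_prop), ← ofReal_integral_eq_lintegral_ofReal
      (integrable_riesz (by linarith) (by linarith) (by linarith) (by linarith) (by linarith) hx)
      (Filter.Eventually.of_forall fun z => by positivity), integral_riesz _ _ hx,
      ← ENNReal.ofReal_mul (by positivity), sub_zero]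
    refine ENNReal.ofReal_le_ofReal ?_
    calc v x ^ 2 * |x| ^ b * (B * |x| ^ (1 - (lam + 1) - b))
        = B * (v x ^ 2 * (|x| ^ b * |x| ^ (1 - (lam + 1) - b))) := by ring
      _ = B * (v x ^ 2 * |x| ^ (-lam)) := by
          rw [← Real.rpow_add hx']; congr 3; ring
      _ ≤ _ := by gcongr; exact hvh x
  calc _ ≤ ∫⁻ q : ℝ × ℝ, (F q + F q.swap) ∂(volume.prod volume) := lintegral_mono_ae hpt
    _ = ∫⁻ q, F q ∂(volume.prod volume) + ∫⁻ q, F q ∂(volume.prod volume) := by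
        rw [lintegral_add_left hFm, lintegral_prod_swap]
    _ ≤ ENNReal.ofReal (B * ∫ x, h x) + ENNReal.ofReal (B * ∫ x, h x) := by gcongr
    _ = _ := by
        have : 0 ≤ B * ∫ x, h x := mul_nonneg hB.le (integral_nonneg hh0)
        rw [← ENNReal.ofReal_add this this]; congr 1; ring

/-! ### The logarithmic majorant -/

/-- The majorant `((x² + ε²)(1 + ε²x²))^(-1/2)` of `|u_ε(x)|² |x|^(-λ)`. -/
noncomputable def majorant (ε x : ℝ) : ℝ :=
  (√(x ^ 2 + ε ^ 2) * √(1 + ε ^ 2 * x ^ 2))⁻¹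

lemma integrable_majorant {ε : ℝ} (h0 : 0 < ε) (h1 : ε < 1) : Integrable (majorant ε) := by
  refine (integrable_inv_one_add_sq.const_mul (ε ^ 2)⁻¹).mono'
    (by unfold majorant; exact (by fun_prop : Measurable _).aestronglyMeasurable)
    (Filter.Eventually.of_forall fun x => ?_)
  unfold majorant
  rw [Real.norm_eq_abs, abs_of_nonneg (by positivity), ← mul_inv,
    ← Real.sqrt_mul (by positivity)]
  refine inv_anti₀ (by positivity) (Real.le_sqrt_of_sq_le ?_)
  have e1 : ε ^ 2 * (1 + x ^ 2) ≤ x ^ 2 + ε ^ 2 := by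
    nlinarith [mul_nonneg (sq_nonneg x) (by nlinarith : 0 ≤ 1 - ε ^ 2)]
  have e2 : ε ^ 2 * (1 + x ^ 2) ≤ 1 + ε ^ 2 * x ^ 2 := by nlinarith
  calc (ε ^ 2 * (1 + x ^ 2)) ^ 2 = (ε ^ 2 * (1 + x ^ 2)) * (ε ^ 2 * (1 + x ^ 2)) := sq _
    _ ≤ _ := by gcongr

/-- The logarithm comes from the range `ε < |x| < 1/ε`, on which the majorant is at most `1/|x|`;
the two remaining ranges contribute `O(1)`. -/
lemma integral_majorant_le {ε : ℝ} (h0 : 0 < ε) (h1 : ε < 1) :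
    ∫ x, majorant ε x ≤ 4 + 4 * |Real.log ε| := by
  have hε : ε < ε⁻¹ := by
    have := (one_lt_inv₀ h0).2 h1; linarith
  have hi := integrable_majorant h0 h1
  have hev : ∀ x, majorant ε x = majorant ε |x| := fun x => by simp [majorant]
  have b1 : ∀ x, ε ≤ √(x ^ 2 + ε ^ 2) := fun x => Real.le_sqrt_of_sq_le (by nlinarith)
  have b2 : ∀ x, x ≤ √(x ^ 2 + ε ^ 2) := fun x => Real.le_sqrt_of_sq_le (by nlinarith)
  have b3 : ∀ x, 1 ≤ √(1 + ε ^ 2 * x ^ 2) := fun x => Real.le_sqrt_of_sq_le (by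
    nlinarith [mul_self_nonneg (ε * x)])
  have b4 : ∀ x, ε * x ≤ √(1 + ε ^ 2 * x ^ 2) := fun x => Real.le_sqrt_of_sq_le (by nlinarith)
  rw [show ∫ x, majorant ε x = ∫ x, majorant ε |x| from
      integral_congr_ae (Filter.Eventually.of_forall hev), integral_comp_abs (f := majorant ε),
    ← Set.Ioc_union_Ioi_eq_Ioi (h0.le.trans hε.le : (0 : ℝ) ≤ ε⁻¹),
    setIntegral_union (Set.Ioc_disjoint_Ioi le_rfl) measurableSet_Ioi hi.integrableOn
      hi.integrableOn,
    ← Set.Ioc_union_Ioc_eq_Ioc h0.le hε.le,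
    setIntegral_union (Set.Ioc_disjoint_Ioc_of_le le_rfl) measurableSet_Ioc hi.integrableOn
      hi.integrableOn]
  have i1 : ∫ x in Set.Ioc 0 ε, majorant ε x ≤ 1 := by
    calc _ ≤ ∫ x in Set.Ioc 0 ε, ε⁻¹ := by
          refine setIntegral_mono_on hi.integrableOn (by simp) measurableSet_Ioc fun x _ => ?_
          refine inv_anti₀ h0 ?_
          nlinarith [b1 x, b3 x]
      _ = 1 := by simp [h0.le, h0.ne']
  have i2 : ∫ x in Set.Ioc ε ε⁻¹, majorant ε x ≤ 2 * |Real.log ε| := by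
    have hint : IntervalIntegrable (fun x : ℝ => x⁻¹) volume ε ε⁻¹ := by
      refine intervalIntegral.intervalIntegrable_inv (fun x hx => ?_) continuousOn_id
      rw [Set.uIcc_of_le hε.le] at hx
      exact (h0.trans_le hx.1).ne'
    calc _ ≤ ∫ x in Set.Ioc ε ε⁻¹, x⁻¹ := by
          refine setIntegral_mono_on hi.integrableOn
            ((intervalIntegrable_iff_integrableOn_Ioc_of_le hε.le).1 hint)
            measurableSet_Ioc fun x hx => ?_
          have hx0 : 0 < x := h0.trans hx.1
          refine inv_anti₀ hx0 ?_
          nlinarith [b2 x, b3 x]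
      _ = _ := by
          rw [← intervalIntegral.integral_of_le hε.le, integral_inv_of_pos h0 (by positivity),
            Real.log_div (by positivity) h0.ne', Real.log_inv, abs_of_neg (Real.log_neg h0 h1)]
          ring
  have i3 : ∫ x in Set.Ioi ε⁻¹, majorant ε x ≤ 1 := by
    have hint : IntegrableOn (fun x : ℝ => ε⁻¹ * x ^ (-2 : ℝ)) (Set.Ioi ε⁻¹) :=
      (integrableOn_Ioi_rpow_of_lt (by norm_num) (by positivity)).const_mul _
    calc _ ≤ ∫ x in Set.Ioi ε⁻¹, ε⁻¹ * x ^ (-2 : ℝ) := by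
          refine setIntegral_mono_on hi.integrableOn hint measurableSet_Ioi fun x hx => ?_
          have hx0 : 0 < x := (inv_pos.2 h0).trans hx
          rw [Real.rpow_neg hx0.le, ← mul_inv]
          refine inv_anti₀ (by positivity) ?_
          rw [Real.rpow_two]
          calc ε * x ^ 2 = x * (ε * x) := by ring
            _ ≤ _ := mul_le_mul (b2 x) (b4 x) (by positivity) (by positivity)
      _ = 1 := by
          rw [integral_const_mul, integral_Ioi_rpow_of_lt (by norm_num) (by positivity)]
          norm_num
          rw [Real.rpow_neg_one]; field_simp
  linarith

lemma le_norm_qEps {ε : ℝ} (h0 : 0 < ε) (h1 : ε < 1) (x : ℝ) :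
    √(x ^ 2 + ε ^ 2) * √(1 + ε ^ 2 * x ^ 2) ≤ ‖qEps ε x‖ := by
  have ha : 1 ≤ aEps ε := by
    have e : ε ^ 2 + (1 - ε ^ 2) ^ 2 / 4 = ((1 + ε ^ 2) / 2) ^ 2 := by ring
    unfold aEps
    rw [e, Real.sqrt_sq (by positivity), le_div_iff₀ (by positivity)]
    nlinarith
  have n1 : ‖(x : ℂ) - (ε : ℂ) * Complex.I‖ = √(x ^ 2 + ε ^ 2) := by
    rw [Complex.norm_def, Complex.normSq_apply]; congr 1; simp; ring
  have n2 : ‖(ε : ℂ) * (x : ℂ) + Complex.I‖ = √(1 + ε ^ 2 * x ^ 2) := by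
    rw [Complex.norm_def, Complex.normSq_apply]; congr 1; simp; ring
  unfold qEps
  rw [norm_mul, norm_mul, n1, n2, Complex.norm_real, Real.norm_eq_abs, abs_of_nonneg (by linarith),
    mul_assoc]
  exact le_mul_of_one_le_left (by positivity) ha

lemma norm_sq_mul_le_majorant {lam : ℝ} (hl : lam < 0) {ε : ℝ} (h0 : 0 < ε) (h1 : ε < 1) (x : ℝ) :
    ‖qEps ε x ^ (((lam : ℂ) - 1) / 2)‖ ^ 2 * |x| ^ (-lam) ≤ majorant ε x := by
  have e : ((lam : ℂ) - 1) / 2 = (((lam - 1) / 2 : ℝ) : ℂ) := by push_cast; ring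
  have hq := le_norm_qEps h0 h1 x
  have hM : 0 < √(x ^ 2 + ε ^ 2) * √(1 + ε ^ 2 * x ^ 2) := by positivity
  have hx : |x| ≤ √(x ^ 2 + ε ^ 2) * √(1 + ε ^ 2 * x ^ 2) := by
    rw [← Real.sqrt_mul (by positivity)]
    apply Real.abs_le_sqrt
    nlinarith [mul_self_nonneg (ε * x), mul_self_nonneg (ε * x ^ 2), mul_self_nonneg (ε ^ 2 * x)]
  unfold majorant
  generalize √(x ^ 2 + ε ^ 2) * √(1 + ε ^ 2 * x ^ 2) = M at *
  rw [e, Complex.norm_cpow_real, ← Real.rpow_natCast, ← Real.rpow_mul (norm_nonneg _),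
    show (lam - 1) / 2 * ((2 : ℕ) : ℝ) = lam - 1 by push_cast; ring]
  calc ‖qEps ε x‖ ^ (lam - 1) * |x| ^ (-lam) ≤ M ^ (lam - 1) * M ^ (-lam) := by
        gcongr ?_ * ?_
        · exact Real.rpow_le_rpow_of_nonpos hM hq (by linarith)
        · exact Real.rpow_le_rpow (abs_nonneg _) hx (by linarith)
    _ = M⁻¹ := by
        rw [← Real.rpow_add hM, ← Real.rpow_neg_one]; congr 1; ring

/-- For each `λ ∈ (−1,0)` there is `C > 0` such that for all `ε ∈ (0,1/2)`, the
double integral `∫∫ |x−x′|^{−λ−1} u_ε(x) conj(u_ε(x′)) dx dx′`, with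
`u_ε = q_ε^{(λ−1)/2}`, converges, is a nonnegative real number (it is the
squared complementary-series norm of `u_ε`), and is at most `C·|log ε|`. -/
theorem stmt17 (lam : ℝ) (hlam : lam ∈ Set.Ioo (-1 : ℝ) 0) :
    ∃ C > (0 : ℝ), ∀ ε ∈ Set.Ioo (0 : ℝ) (1 / 2),
      MeasureTheory.Integrable
        (fun p : ℝ × ℝ => ((|p.1 - p.2| ^ (-lam - 1) : ℝ) : ℂ) *
          (qEps ε p.1 ^ (((lam : ℂ) - 1) / 2)) *
          (starRingEnd ℂ) (qEps ε p.2 ^ (((lam : ℂ) - 1) / 2)))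
        (volume.prod volume) ∧
      (∫ p : ℝ × ℝ, ((|p.1 - p.2| ^ (-lam - 1) : ℝ) : ℂ) *
          (qEps ε p.1 ^ (((lam : ℂ) - 1) / 2)) *
          (starRingEnd ℂ) (qEps ε p.2 ^ (((lam : ℂ) - 1) / 2))
          ∂(volume.prod volume)).im = 0 ∧
      0 ≤ (∫ p : ℝ × ℝ, ((|p.1 - p.2| ^ (-lam - 1) : ℝ) : ℂ) *
          (qEps ε p.1 ^ (((lam : ℂ) - 1) / 2)) *
          (starRingEnd ℂ) (qEps ε p.2 ^ (((lam : ℂ) - 1) / 2))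
          ∂(volume.prod volume)).re ∧
      (∫ p : ℝ × ℝ, ((|p.1 - p.2| ^ (-lam - 1) : ℝ) : ℂ) *
          (qEps ε p.1 ^ (((lam : ℂ) - 1) / 2)) *
          (starRingEnd ℂ) (qEps ε p.2 ^ (((lam : ℂ) - 1) / 2))
          ∂(volume.prod volume)).re ≤ C * |Real.log ε| := by
  obtain ⟨hl0, hl1⟩ := hlam
  set B := betaConst (lam + 1) ((1 - lam) / 2) with hBdef
  have hB : 0 < B :=
    betaConst_pos (by linarith) (by linarith) (by linarith) (by linarith) (by linarith)
  refine ⟨24 * B, by positivity, fun ε hε => ?_⟩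
  obtain ⟨h0, h2⟩ := hε
  have h1 : ε < 1 := by linarith
  set u : ℝ → ℂ := fun x => qEps ε x ^ (((lam : ℂ) - 1) / 2) with hu
  have hum : Measurable u := by
    have : Measurable (qEps ε) := by unfold qEps; fun_prop
    exact this.pow_const _
  have hS := riesz_schur hl0 hl1 hum.norm (fun x => norm_nonneg (u x))
    (integrable_majorant h0 h1) (norm_sq_mul_le_majorant hl1 h0 h1)
  set G : ℝ × ℝ → ℂ := fun p => ((|p.1 - p.2| ^ (-lam - 1) : ℝ) : ℂ) * u p.1 *
    (starRingEnd ℂ) (u p.2) with hG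
  have hGn : ∀ p, ‖G p‖ = |p.1 - p.2| ^ (-lam - 1) * ‖u p.1‖ * ‖u p.2‖ := by
    intro p
    rw [hG, norm_mul, norm_mul, Complex.norm_real, Real.norm_eq_abs, abs_of_nonneg (by positivity),
      RCLike.norm_conj]
  have hGm : Measurable G := by
    have hc : Measurable (starRingEnd ℂ) := Complex.continuous_conj.measurable
    fun_prop
  simp_rw [← hGn] at hS
  have hGi : Integrable G (volume.prod volume) := by
    refine ⟨hGm.aestronglyMeasurable, ?_⟩
    rw [hasFiniteIntegral_iff_norm]
    exact hS.trans_lt ENNReal.ofReal_lt_top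
  have hlog : 1 ≤ 2 * |Real.log ε| := by
    have : Real.log ε ≤ - Real.log 2 := by
      rw [← Real.log_inv]; exact Real.log_le_log h0 (by linarith)
    rw [abs_of_neg (Real.log_neg h0 h1)]
    linarith [Real.log_two_gt_d9]
  have hm := integral_majorant_le h0 h1
  have hm0 : 0 ≤ ∫ x, majorant ε x :=
    integral_nonneg fun x => by unfold majorant; positivity
  have hnorm : ‖∫ p, G p ∂(volume.prod volume)‖ ≤ 24 * B * |Real.log ε| := by
    refine (norm_integral_le_lintegral_norm G).trans ?_
    refine (ENNReal.toReal_mono ENNReal.ofReal_ne_top hS).trans ?_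
    rw [ENNReal.toReal_ofReal (by positivity)]
    calc 2 * B * ∫ x, majorant ε x ≤ 2 * B * (12 * |Real.log ε|) := by gcongr; linarith
      _ = _ := by ring
  -- The exponent `-lam - 1` is `1 - p - p` for `p = (lam + 2) / 2`.
  have hexp : (-lam - 1 : ℝ) = 1 - (lam + 2) / 2 - (lam + 2) / 2 := by ring
  obtain ⟨r, hr0, hr⟩ : ∃ r : ℝ, 0 ≤ r ∧ ∫ p, G p ∂(volume.prod volume) = (r : ℂ) := by
    have := riesz_energy_nonneg (p := (lam + 2) / 2) (by linarith) (by linarith) hum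
    rw [← hexp] at this
    exact this hGi
  refine ⟨hGi, ?_, ?_, ?_⟩
  · change (∫ p, G p ∂(volume.prod volume)).im = 0
    rw [hr]; simp
  · change 0 ≤ (∫ p, G p ∂(volume.prod volume)).re
    rw [hr]; simpa using hr0
  · exact (Complex.re_le_norm _).trans hnorm
end
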